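/- Let κ > 0 and let u, v : ℝ × ℝ⁵ → ℂ be smooth functions which, together with all their derivatives, are Schwartz in the space variable locally uniformly in time, and which satisfy the system i∂ₜu + Δₓu + v·conj(u) = 0 and i∂ₜv + κΔₓv + u² = 0 on ℝ × ℝ⁵. Then the momentum t ↦ Im ∫_{ℝ⁵} ( conj(u(t,x)) ∇ₓu(t,x) + (1/2) conj(v(t,x)) ∇ₓv(t,x) ) dx ∈ ℝ⁵ is constant in t. -/

import Mathlib

open MeasureTheory Complex ComplexConjugate

noncomputable section

abbrev E5 := EuclideanSpace ℝ (Fin 5)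

/-- Spatial partial derivative of `f` at `x` in coordinate direction `i`. -/
def pd (f : E5 → ℂ) (x : E5) (i : Fin 5) : ℂ :=
  fderiv ℝ f x (EuclideanSpace.single i 1)

/-- Spatial Laplacian. -/
def lap (f : E5 → ℂ) (x : E5) : ℂ :=
  ∑ i : Fin 5, fderiv ℝ (fun y => pd f y i) x (EuclideanSpace.single i 1)

/-- `u` and all its derivatives are Schwartz in the space variable,
locally uniformly in time. -/
def SchwartzLocUnifT (u : ℝ × E5 → ℂ) : Prop :=
  ∀ (n k : ℕ) (K : Set ℝ), IsCompact K →
    ∃ C : ℝ, ∀ t ∈ K, ∀ x : E5, ‖x‖ ^ k * ‖iteratedFDeriv ℝ n u (t, x)‖ ≤ C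


/-- Directional derivative in space-time. -/
def DD (w : ℝ × E5) (f : ℝ × E5 → ℂ) (p : ℝ × E5) : ℂ := fderiv ℝ f p w

/-- Smooth and Schwartz in space, locally uniformly in time. -/
def Good (f : ℝ × E5 → ℂ) : Prop := ContDiff ℝ (⊤ : ℕ∞) f ∧ SchwartzLocUnifT f

lemma Good.diff {f : ℝ × E5 → ℂ} (hf : Good f) (p : ℝ × E5) : DifferentiableAt ℝ f p :=
  (hf.1.differentiable (by simp)) p

lemma Good.dd {f : ℝ × E5 → ℂ} (hf : Good f) (w : ℝ × E5) : Good (DD w f) := by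
  have h1 : ContDiff ℝ (⊤ : ℕ∞) (fderiv ℝ f) := hf.1.fderiv_right (by simp)
  refine ⟨h1.clm_apply contDiff_const, ?_⟩
  intro n k K hK
  obtain ⟨C, hC⟩ := hf.2 (n+1) k K hK
  refine ⟨‖w‖ * C, fun t ht x => ?_⟩
  have h2 : ‖iteratedFDeriv ℝ n (DD w f) (t, x)‖ ≤ ‖w‖ * ‖iteratedFDeriv ℝ n (fderiv ℝ f) (t, x)‖ :=
    norm_iteratedFDeriv_clm_apply_const (N := (⊤ : ℕ∞)) h1.contDiffAt (by exact_mod_cast le_top)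
  rw [norm_iteratedFDeriv_fderiv] at h2
  calc _ ≤ ‖x‖ ^ k * (‖w‖ * ‖iteratedFDeriv ℝ (n+1) f (t, x)‖) := by gcongr
    _ = ‖w‖ * (‖x‖ ^ k * ‖iteratedFDeriv ℝ (n+1) f (t, x)‖) := by ring
    _ ≤ _ := by gcongr; exact hC t ht x

lemma Good.mul {f g : ℝ × E5 → ℂ} (hf : Good f) (hg : Good g) : Good (fun p => f p * g p) := by
  refine ⟨hf.1.mul hg.1, ?_⟩
  intro n k K hK
  choose A hA using fun m => hf.2 m 0 K hK
  choose B hB using fun m => hg.2 m k K hK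
  refine ⟨∑ i ∈ Finset.range (n+1), (n.choose i : ℝ) * A i * B (n-i), fun t ht x => ?_⟩
  have h := norm_iteratedFDeriv_mul_le hf.1 hg.1 (t, x) (n := n) (by exact_mod_cast le_top)
  calc _ ≤ ‖x‖ ^ k * _ := mul_le_mul_of_nonneg_left h (by positivity)
    _ ≤ _ := by
      rw [Finset.mul_sum]
      refine Finset.sum_le_sum fun i _ => ?_
      have a := hA i t ht x
      have b := hB (n-i) t ht x
      rw [pow_zero, one_mul] at a
      calc _ = (n.choose i : ℝ) * ‖iteratedFDeriv ℝ i f (t, x)‖ *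
            (‖x‖ ^ k * ‖iteratedFDeriv ℝ (n-i) g (t, x)‖) := by ring
        _ ≤ _ := by
          have : 0 ≤ A i := (norm_nonneg _).trans a
          gcongr

lemma Good.conj {f : ℝ × E5 → ℂ} (hf : Good f) : Good (fun p => conj (f p)) := by
  refine ⟨Complex.conjCLE.contDiff.comp hf.1, ?_⟩
  intro n k K hK
  obtain ⟨C, hC⟩ := hf.2 n k K hK
  refine ⟨C, fun t ht x => ?_⟩
  have := Complex.conjLIE.norm_iteratedFDeriv_comp_left f (t, x) n
  have h2 : (⇑Complex.conjLIE ∘ f) = fun p => (starRingEnd ℂ) (f p) := rfl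
  rw [h2] at this
  rw [this]
  exact hC t ht x

lemma Good.add {f g : ℝ × E5 → ℂ} (hf : Good f) (hg : Good g) : Good (fun p => f p + g p) := by
  refine ⟨hf.1.add hg.1, ?_⟩
  intro n k K hK
  obtain ⟨A, hA⟩ := hf.2 n k K hK
  obtain ⟨B, hB⟩ := hg.2 n k K hK
  refine ⟨A + B, fun t ht x => ?_⟩
  have h : iteratedFDeriv ℝ n (fun p => f p + g p) (t, x) =
      iteratedFDeriv ℝ n f (t, x) + iteratedFDeriv ℝ n g (t, x) :=
    iteratedFDeriv_add_apply (hf.1.contDiffAt.of_le (by exact_mod_cast le_top))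
      (hg.1.contDiffAt.of_le (by exact_mod_cast le_top))
  rw [h]
  calc _ ≤ ‖x‖ ^ k * (‖iteratedFDeriv ℝ n f (t, x)‖ + ‖iteratedFDeriv ℝ n g (t, x)‖) := by
        gcongr; exact norm_add_le _ _
    _ ≤ _ := by rw [mul_add]; exact add_le_add (hA t ht x) (hB t ht x)

lemma Good.smul {f : ℝ × E5 → ℂ} (hf : Good f) (c : ℂ) : Good (fun p => c * f p) := by
  refine ⟨contDiff_const.mul hf.1, ?_⟩
  intro n k K hK
  obtain ⟨A, hA⟩ := hf.2 n k K hK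
  refine ⟨‖c‖ * A, fun t ht x => ?_⟩
  have h : iteratedFDeriv ℝ n (fun p => c * f p) (t, x) = c • iteratedFDeriv ℝ n f (t, x) :=
    iteratedFDeriv_const_smul_apply (a := c) (hf.1.contDiffAt.of_le (by exact_mod_cast le_top))
  rw [h, norm_smul]
  calc _ = ‖c‖ * (‖x‖ ^ k * ‖iteratedFDeriv ℝ n f (t, x)‖) := by ring
    _ ≤ _ := by gcongr; exact hA t ht x

lemma bound_integrable (C : ℝ) : Integrable (fun x : E5 => C * (1 + ‖x‖) ^ (-(6:ℝ))) := by
  refine (integrable_one_add_norm ?_).const_mul C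
  simp; norm_num

lemma Good.bound {f : ℝ × E5 → ℂ} (hf : Good f) {K : Set ℝ} (hK : IsCompact K) :
    ∃ C : ℝ, ∀ t ∈ K, ∀ x : E5, ‖f (t, x)‖ ≤ C * (1 + ‖x‖) ^ (-(6:ℝ)) := by
  obtain ⟨A, hA⟩ := hf.2 0 0 K hK
  obtain ⟨B, hB⟩ := hf.2 0 6 K hK
  refine ⟨2 ^ 5 * (A + B), fun t ht x => ?_⟩
  have a := hA t ht x
  have b := hB t ht x
  rw [norm_iteratedFDeriv_zero] at a b
  have hpos : 0 < 1 + ‖x‖ := by positivity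
  rw [Real.rpow_neg hpos.le, ← div_eq_mul_inv, le_div_iff₀ (by positivity)]
  have h6 : (1 + ‖x‖) ^ (6:ℝ) = (1 + ‖x‖) ^ 6 := by
    exact_mod_cast Real.rpow_natCast (1 + ‖x‖) 6
  rw [h6]
  have h := add_pow_le (zero_le_one) (norm_nonneg x) 6
  calc ‖f (t, x)‖ * (1 + ‖x‖) ^ 6 ≤ ‖f (t, x)‖ * (2 ^ (6-1) * (1 ^ 6 + ‖x‖ ^ 6)) := by gcongr
    _ = 2 ^ 5 * (‖x‖ ^ 0 * ‖f (t, x)‖ + ‖x‖ ^ 6 * ‖f (t, x)‖) := by norm_num; ring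
    _ ≤ _ := by gcongr

lemma Good.cont {f : ℝ × E5 → ℂ} (hf : Good f) (t : ℝ) : Continuous (fun x => f (t, x)) :=
  hf.1.continuous.comp (by fun_prop)

lemma Good.integrable {f : ℝ × E5 → ℂ} (hf : Good f) (t : ℝ) :
    Integrable (fun x => f (t, x)) := by
  obtain ⟨C, hC⟩ := hf.bound (isCompact_singleton (x := t))
  exact (bound_integrable C).mono' (hf.cont t).aestronglyMeasurable
    (Filter.Eventually.of_forall fun x => hC t rfl x)

lemma slice_space {f : ℝ × E5 → ℂ} {t : ℝ} {x : E5} (hf : DifferentiableAt ℝ f (t, x)) (w : E5) :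
    fderiv ℝ (fun y => f (t, y)) x w = DD (0, w) f (t, x) := by
  have h1 : HasFDerivAt (fun y : E5 => (t, y)) (ContinuousLinearMap.inr ℝ ℝ E5) x :=
    hasFDerivAt_prodMk_right t x
  have h2 := (hf.hasFDerivAt (x := (t, x))).comp x h1
  have h3 : HasFDerivAt (fun y => f (t, y)) _ x := h2
  rw [h3.fderiv]
  simp [DD]

lemma slice_time {f : ℝ × E5 → ℂ} {t : ℝ} {x : E5} (hf : DifferentiableAt ℝ f (t, x)) :
    HasDerivAt (fun s => f (s, x)) (DD (1, 0) f (t, x)) t := by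
  have h1 : HasDerivAt (fun s : ℝ => (s, x)) ((1 : ℝ), (0 : E5)) t :=
    (hasDerivAt_id t).prodMk (hasDerivAt_const t x)
  exact (hf.hasFDerivAt (x := (t, x))).comp_hasDerivAt t h1

lemma Good.hasDerivAt {f : ℝ × E5 → ℂ} (hf : Good f) (t : ℝ) :
    HasDerivAt (fun s => ∫ x, f (s, x)) (∫ x, DD (1, 0) f (t, x)) t := by
  obtain ⟨C, hC⟩ := (hf.dd (1, 0)).bound (isCompact_Icc (a := t - 1) (b := t + 1))
  refine (hasDerivAt_integral_of_dominated_loc_of_deriv_le (F := fun s x => f (s, x))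
    (F' := fun s x => DD (1, 0) f (s, x))
    (Icc_mem_nhds (by linarith : t - 1 < t) (by linarith : t < t + 1))
    (Filter.Eventually.of_forall fun s => (hf.cont s).aestronglyMeasurable) (hf.integrable t)
    ((hf.dd _).cont t).aestronglyMeasurable
    (Filter.Eventually.of_forall fun x s hs => hC s hs x) (bound_integrable C)
    (Filter.Eventually.of_forall fun x s _ => slice_time (hf.diff _))).2

/-- Integrable at time `t`, with zero integral. -/
def ZI (t : ℝ) (g : ℝ × E5 → ℂ) : Prop :=
  Integrable (fun x => g (t, x)) ∧ ∫ x, g (t, x) = 0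

lemma Good.zi {f : ℝ × E5 → ℂ} (hf : Good f) (t : ℝ) (w : E5) : ZI t (DD (0, w) f) := by
  refine ⟨(hf.dd _).integrable t, ?_⟩
  have hs : ∀ x, fderiv ℝ (fun y => f (t, y)) x w = DD (0, w) f (t, x) :=
    fun x => slice_space (hf.diff _) w
  have h := integral_mul_fderiv_eq_neg_fderiv_mul_of_integrable (μ := (volume : Measure E5))
    (f := fun _ : E5 => (1 : ℂ)) (g := fun y => f (t, y)) (v := w)
    (by simp) (by simpa [hs] using (hf.dd (0, w)).integrable t) (by simpa using hf.integrable t)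
    (fun x _ => by fun_prop)
    (fun x _ => (hf.diff (t, x)).comp x (by fun_prop))
  simpa [hs] using h

lemma ZI.add {t : ℝ} {f g : ℝ × E5 → ℂ} (hf : ZI t f) (hg : ZI t g) :
    ZI t (fun p => f p + g p) :=
  ⟨hf.1.add hg.1, by rw [integral_add hf.1 hg.1, hf.2, hg.2, add_zero]⟩

lemma ZI.smul {t : ℝ} {f : ℝ × E5 → ℂ} (hf : ZI t f) (c : ℂ) : ZI t (fun p => c * f p) :=
  ⟨hf.1.const_mul c, by rw [integral_const_mul, hf.2, mul_zero]⟩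

lemma ZI.sum {t : ℝ} {f : Fin 5 → ℝ × E5 → ℂ} (hf : ∀ k, ZI t (f k)) :
    ZI t (fun p => ∑ k, f k p) :=
  ⟨integrable_finsetSum _ fun k _ => (hf k).1, by
    rw [integral_finsetSum _ fun k _ => (hf k).1]
    exact Finset.sum_eq_zero fun k _ => (hf k).2⟩

lemma Good.dd_mul {f g : ℝ × E5 → ℂ} (hf : Good f) (hg : Good g) (w p : ℝ × E5) :
    DD w (fun p => f p * g p) p = f p * DD w g p + DD w f p * g p := by
  have h := fderiv_fun_mul (hf.diff p) (hg.diff p)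
  simp only [DD, h]
  simp
  ring

lemma Good.dd_add {f g : ℝ × E5 → ℂ} (hf : Good f) (hg : Good g) (w p : ℝ × E5) :
    DD w (fun p => f p + g p) p = DD w f p + DD w g p := by
  have h := fderiv_fun_add (hf.diff p) (hg.diff p)
  simp only [DD, h]
  simp

lemma Good.dd_smul {f : ℝ × E5 → ℂ} (hf : Good f) (c : ℂ) (w p : ℝ × E5) :
    DD w (fun p => c * f p) p = c * DD w f p := by
  have h := fderiv_const_mul (hf.diff p) c
  simp only [DD, h]
  simp

lemma Good.dd_conj {f : ℝ × E5 → ℂ} (hf : Good f) (w p : ℝ × E5) :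
    DD w (fun p => (starRingEnd ℂ) (f p)) p = (starRingEnd ℂ) (DD w f p) := by
  have h : HasFDerivAt (fun p => (starRingEnd ℂ) (f p)) _ p :=
    Complex.conjCLE.hasFDerivAt.comp p (hf.diff p).hasFDerivAt
  simp only [DD, h.fderiv]
  simp

lemma Good.dd_comm {f : ℝ × E5 → ℂ} (hf : Good f) (w z p : ℝ × E5) :
    DD w (DD z f) p = DD z (DD w f) p := by
  have h1 : ContDiff ℝ (⊤ : ℕ∞) (fderiv ℝ f) := hf.1.fderiv_right (by simp)
  have h2 : DifferentiableAt ℝ (fderiv ℝ f) p := h1.differentiable (by simp) p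
  have key : ∀ a b, DD a (DD b f) p = fderiv ℝ (fderiv ℝ f) p a b := by
    intro a b
    have h := fderiv_clm_apply h2 (differentiableAt_const (c := b))
    have e : DD b f = fun y => (fderiv ℝ f y) b := rfl
    rw [e]
    simp only [DD]
    rw [h]
    simp
  rw [key, key]
  exact (hf.1.contDiffAt.isSymmSndFDerivAt (by rw [minSmoothness_of_isRCLikeNormedField]; exact WithTop.coe_le_coe.2 (le_top (a := (2 : ℕ∞))))).eq w z

/-- The unit vector in space direction `k`, as a space-time vector. -/
def ee (k : Fin 5) : ℝ × E5 := (0, EuclideanSpace.single k 1)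

lemma pd_eq {f : ℝ × E5 → ℂ} (hf : Good f) (t : ℝ) (x : E5) (k : Fin 5) :
    pd (fun y => f (t, y)) x k = DD (ee k) f (t, x) := slice_space (hf.diff _) _

lemma lap_eq {f : ℝ × E5 → ℂ} (hf : Good f) (t : ℝ) (x : E5) :
    lap (fun y => f (t, y)) x = ∑ k, DD (ee k) (DD (ee k) f) (t, x) := by
  unfold lap
  refine Finset.sum_congr rfl fun k _ => ?_
  simp only [pd_eq hf]
  exact slice_space ((hf.dd _).diff _) _

/-- Momentum flux of the kinetic part. -/
def BB (f : ℝ × E5 → ℂ) (k j : Fin 5) (p : ℝ × E5) : ℂ :=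
  2 * DD (ee k) (fun p => conj (DD (ee k) f p) * DD (ee j) f p) p +
    (-1) * DD (ee j) (fun p => conj (DD (ee k) f p) * DD (ee k) f p) p

lemma BB_zi {f : ℝ × E5 → ℂ} (hf : Good f) (t : ℝ) (k j : Fin 5) : ZI t (BB f k j) :=
  ((((hf.dd _).conj.mul (hf.dd _)).zi t _).smul 2).add
    ((((hf.dd _).conj.mul (hf.dd _)).zi t _).smul (-1))

lemma BB_re {f : ℝ × E5 → ℂ} (hf : Good f) (k j : Fin 5) (p : ℝ × E5) :
    (BB f k j p).re = 2 * (conj (DD (ee k) (DD (ee k) f) p) * DD (ee j) f p).re := by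
  unfold BB
  rw [(hf.dd _).conj.dd_mul (hf.dd _), (hf.dd _).conj.dd_mul (hf.dd _), (hf.dd _).dd_conj,
    (hf.dd _).dd_conj, hf.dd_comm (ee j) (ee k)]
  simp
  ring

/-- The term coming from the time derivative. -/
def AA (f : ℝ × E5 → ℂ) (j : Fin 5) (p : ℝ × E5) : ℂ :=
  DD (ee j) (fun p => conj (f p) * DD (1, 0) f p) p

lemma AA_zi {f : ℝ × E5 → ℂ} (hf : Good f) (t : ℝ) (j : Fin 5) : ZI t (AA f j) :=
  (hf.conj.mul (hf.dd _)).zi t _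

lemma AA_im {f : ℝ × E5 → ℂ} (hf : Good f) (j : Fin 5) (p : ℝ × E5) :
    (DD (1, 0) (fun p => conj (f p) * DD (ee j) f p) p).im =
      (AA f j p).im + 2 * (conj (DD (1, 0) f p) * DD (ee j) f p).im := by
  unfold AA
  rw [hf.conj.dd_mul (hf.dd _), hf.conj.dd_mul (hf.dd _), hf.dd_conj, hf.dd_conj,
    hf.dd_comm (ee j) (1, 0)]
  simp
  ring

theorem momentum_conservation (κ : ℝ) (hκ : 0 < κ) (u v : ℝ × E5 → ℂ)
    (hu : ContDiff ℝ (⊤ : ℕ∞) u) (hv : ContDiff ℝ (⊤ : ℕ∞) v)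
    (hus : SchwartzLocUnifT u) (hvs : SchwartzLocUnifT v)
    (heq1 : ∀ (t : ℝ) (x : E5),
      I * deriv (fun s => u (s, x)) t + lap (fun y => u (t, y)) x
        + v (t, x) * conj (u (t, x)) = 0)
    (heq2 : ∀ (t : ℝ) (x : E5),
      I * deriv (fun s => v (s, x)) t + (κ : ℂ) * lap (fun y => v (t, y)) x
        + (u (t, x)) ^ 2 = 0) :
    ∀ (t₁ t₂ : ℝ) (i : Fin 5),
      (∫ x : E5, (conj (u (t₁, x)) * pd (fun y => u (t₁, y)) x i
          + (1 / 2 : ℂ) * conj (v (t₁, x)) * pd (fun y => v (t₁, y)) x i)).im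
        = (∫ x : E5, (conj (u (t₂, x)) * pd (fun y => u (t₂, y)) x i
          + (1 / 2 : ℂ) * conj (v (t₂, x)) * pd (fun y => v (t₂, y)) x i)).im := by
  have gu : Good u := ⟨hu, hus⟩
  have gv : Good v := ⟨hv, hvs⟩
  intro t₁ t₂ j
  set P : ℝ × E5 → ℂ := fun p => conj (u p) * DD (ee j) u p
    + (1 / 2 : ℂ) * (conj (v p) * DD (ee j) v p) with hP
  have gPu := gu.conj.mul (gu.dd (ee j))
  have gPv := gv.conj.mul (gv.dd (ee j))
  have gP : Good P := gPu.add (gPv.smul _)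
  have hM : ∀ t, (∫ x : E5, (conj (u (t, x)) * pd (fun y => u (t, y)) x j
          + (1 / 2 : ℂ) * conj (v (t, x)) * pd (fun y => v (t, y)) x j)) = ∫ x, P (t, x) := by
    intro t
    refine integral_congr_ae (Filter.Eventually.of_forall fun x => ?_)
    simp only [hP, pd_eq gu, pd_eq gv]
    ring
  rw [hM, hM]
  have hC : Good (fun p => conj (v p) * (u p * u p)) := gv.conj.mul (gu.mul gu)
  have key : ∀ t, (∫ x, DD (1, 0) P (t, x)).im = 0 := by
    intro t
    have zX : ZI t (fun p => (AA u j p + (1/2 : ℂ) * AA v j p) +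
        ((-I) * (∑ k, (BB u k j p + ((κ / 2 : ℝ) : ℂ) * BB v k j p))
          + (-I) * DD (ee j) (fun p => conj (v p) * (u p * u p)) p)) :=
      ((AA_zi gu t j).add ((AA_zi gv t j).smul _)).add
        (((ZI.sum fun k => (BB_zi gu t k j).add ((BB_zi gv t k j).smul _)).smul _).add
          ((hC.zi t _).smul _))
    have hPi := (gP.dd (1, 0)).integrable t
    have e1 : (∫ x, DD (1, 0) P (t, x)).im = ∫ x, (DD (1, 0) P (t, x)).im :=
      (Complex.imCLM.integral_comp_comm hPi).symm
    have e2 := Complex.imCLM.integral_comp_comm zX.1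
    rw [zX.2, map_zero] at e2
    rw [e1, ← e2]
    refine integral_congr_ae (Filter.Eventually.of_forall fun x => ?_)
    have q1 := heq1 t x
    have q2 := heq2 t x
    rw [lap_eq gu, (slice_time (gu.diff _)).deriv] at q1
    rw [lap_eq gv, (slice_time (gv.diff _)).deriv] at q2
    set Lu := ∑ k, DD (ee k) (DD (ee k) u) (t, x) with hLu
    set Lv := ∑ k, DD (ee k) (DD (ee k) v) (t, x) with hLv
    have hsum : (∑ k, (BB u k j (t, x) + ((κ / 2 : ℝ) : ℂ) * BB v k j (t, x))).re =
        2 * (conj Lu * DD (ee j) u (t, x)).re + κ * (conj Lv * DD (ee j) v (t, x)).re := by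
      rw [Complex.re_sum, hLu, hLv, map_sum, map_sum, Finset.sum_mul, Finset.sum_mul,
        Complex.re_sum, Complex.re_sum, Finset.mul_sum, Finset.mul_sum, ← Finset.sum_add_distrib]
      refine Finset.sum_congr rfl fun k _ => ?_
      rw [Complex.add_re, Complex.re_ofReal_mul, BB_re gu, BB_re gv]
      ring
    have hdP : (DD (1, 0) P (t, x)).im =
        (AA u j (t, x)).im + 2 * (conj (DD (1, 0) u (t, x)) * DD (ee j) u (t, x)).im
        + (1/2) * (AA v j (t, x)).im + (conj (DD (1, 0) v (t, x)) * DD (ee j) v (t, x)).im := by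
      rw [hP, gPu.dd_add (gPv.smul _), gPv.dd_smul, Complex.add_im, AA_im gu]
      have : ∀ z : ℂ, ((1/2 : ℂ) * z).im = (1/2) * z.im := by intro z; simp
      rw [this, AA_im gv]
      ring
    have hdC := gv.conj.dd_mul (gu.mul gu) (ee j) (t, x)
    rw [gu.dd_mul gu, gv.dd_conj] at hdC
    have half : ∀ z : ℂ, ((1/2 : ℂ) * z).im = (1/2) * z.im := by intro z; simp
    have mI : ∀ z : ℂ, ((-I) * z).im = - z.re := by intro z; simp
    simp only [Complex.imCLM_apply, Complex.add_im, half, mI]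
    rw [hdP, hsum, hdC]
    generalize DD (1, 0) u (t, x) = ut at *
    generalize DD (1, 0) v (t, x) = vt at *
    generalize DD (ee j) u (t, x) = uj at *
    generalize DD (ee j) v (t, x) = vj at *
    generalize u (t, x) = a at *
    generalize v (t, x) = b at *
    clear_value Lu Lv
    have r1 := congrArg Complex.re q1
    have i1 := congrArg Complex.im q1
    have r2 := congrArg Complex.re q2
    have i2 := congrArg Complex.im q2
    simp [pow_two] at r1 i1 r2 i2 ⊢
    linear_combination 2 * uj.re * r1 + 2 * uj.im * i1 + vj.re * r2 + vj.im * i2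
  have hD : ∀ t, HasDerivAt (fun s => (∫ x, P (s, x)).im) 0 t := by
    intro t
    have h := Complex.imCLM.hasFDerivAt.comp_hasDerivAt t (gP.hasDerivAt t)
    rw [← key t]
    exact h
  exact is_const_of_deriv_eq_zero (fun t => (hD t).differentiableAt) (fun t => (hD t).deriv) t₁ t₂
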